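/- Let A generate an α-times resolvent family {S_α(t)}_{t≥0} on X, where 1 < α < 2, and let r > 0. If S_α(·) is of bounded semivariation on [0,r], then P_α(t)x ∈ D(A) for every x ∈ X and every t ∈ [0,r], and sup_{t∈[0,r]} ‖t A P_α(t)‖ < ∞, i.e. there is a constant M such that ‖t A(P_α(t)x)‖ ≤ M ‖x‖ for all x ∈ X and t ∈ [0,r]. -/

import Mathlib

open MeasureTheory Set

/-- `g β t = t^(β-1)/Γ(β)`. -/
noncomputable def g (β t : ℝ) : ℝ := t ^ (β - 1) / Real.Gamma β

/-- `Pa α S t x = (g_{α-1} * S)(t) x = ∫_0^t g_{α-1}(t-s) S(s) x ds`. -/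
noncomputable def Pa {X : Type*} [NormedAddCommGroup X] [NormedSpace ℂ X]
    (α : ℝ) (S : ℝ → X →L[ℂ] X) (t : ℝ) (x : X) : X :=
  ∫ s in (0:ℝ)..t, g (α - 1) (t - s) • S s x

/-- `G` is of bounded semivariation on `[0, r]`: the quantities
`‖∑ (G(d_{i+1}) - G(d_i)) x_i‖` over all partitions `0 = d_0 < ⋯ < d_n = r`
and all vectors of norm at most one are uniformly bounded. -/
def BoundedSemivariation {X : Type*} [NormedAddCommGroup X] [NormedSpace ℂ X]
    (G : ℝ → X →L[ℂ] X) (r : ℝ) : Prop :=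
  ∃ C : ℝ, ∀ (n : ℕ) (d : ℕ → ℝ) (x : ℕ → X),
    d 0 = 0 → d n = r → (∀ i < n, d i < d (i + 1)) → (∀ i, ‖x i‖ ≤ 1) →
    ‖∑ i ∈ Finset.range n, (G (d (i + 1)) - G (d i)) (x i)‖ ≤ C


section aux
variable {E : Type*} [NormedAddCommGroup E] [NormedSpace ℝ E]

theorem tri_gen (G : ℝ → ℝ → E) {t : ℝ} (ht : 0 ≤ t)
    (hint : IntegrableOn (fun p : ℝ × ℝ => if p.1 < p.2 then G p.1 p.2 else 0)
      (uIoc 0 t ×ˢ uIoc 0 t)) :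
    ∫ σ in (0:ℝ)..t, ∫ τ in σ..t, G σ τ = ∫ τ in (0:ℝ)..t, ∫ σ in (0:ℝ)..τ, G σ τ := by
  have key := intervalIntegral_intervalIntegral_swap
    (F := fun σ τ => if σ < τ then G σ τ else 0) (a := 0) (b := t) (c := 0) (d := t) hint
  have h1 : ∀ σ ∈ uIcc 0 t, ∫ τ in (0:ℝ)..t, (if σ < τ then G σ τ else 0)
      = ∫ τ in σ..t, G σ τ := by
    intro σ hσ
    rw [uIcc_of_le ht] at hσ
    rw [intervalIntegral.integral_of_le ht, intervalIntegral.integral_of_le hσ.2]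
    have : (fun τ => if σ < τ then G σ τ else 0) = (Ioi σ).indicator (G σ) := by
      ext τ; simp [indicator]
    rw [this, setIntegral_indicator measurableSet_Ioi]
    congr 2
    ext u; simp only [mem_inter_iff, mem_Ioc, mem_Ioi]
    constructor
    · rintro ⟨⟨_, h⟩, h'⟩; exact ⟨h', h⟩
    · rintro ⟨h, h'⟩; exact ⟨⟨lt_of_le_of_lt hσ.1 h, h'⟩, h⟩
  have h2 : ∀ τ ∈ uIcc 0 t, ∫ σ in (0:ℝ)..t, (if σ < τ then G σ τ else 0)
      = ∫ σ in (0:ℝ)..τ, G σ τ := by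
    intro τ hτ
    rw [uIcc_of_le ht] at hτ
    rw [intervalIntegral.integral_of_le ht, intervalIntegral.integral_of_le hτ.1]
    have : (fun σ => if σ < τ then G σ τ else 0) = (Iio τ).indicator (fun σ => G σ τ) := by
      ext σ; simp [indicator]
    rw [this, setIntegral_indicator measurableSet_Iio, integral_Ioc_eq_integral_Ioo]
    congr 2
    ext u; simp only [mem_inter_iff, mem_Ioc, mem_Iio, mem_Ioo]
    constructor
    · rintro ⟨⟨h, _⟩, h'⟩; exact ⟨h, h'⟩
    · rintro ⟨h, h'⟩; exact ⟨⟨h, by linarith [hτ.2]⟩, h'⟩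
  rw [← intervalIntegral.integral_congr h1, ← intervalIntegral.integral_congr h2]
  exact key

theorem tri_cont (G : ℝ → ℝ → E) (hG : Continuous (fun p : ℝ × ℝ => G p.1 p.2)) {t : ℝ}
    (ht : 0 ≤ t) :
    ∫ σ in (0:ℝ)..t, ∫ τ in σ..t, G σ τ = ∫ τ in (0:ℝ)..t, ∫ σ in (0:ℝ)..τ, G σ τ := by
  apply tri_gen G ht
  have : (fun p : ℝ × ℝ => if p.1 < p.2 then G p.1 p.2 else 0)
      = {p : ℝ × ℝ | p.1 < p.2}.indicator (fun p => G p.1 p.2) := by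
    ext p; simp [indicator]
  rw [this]
  apply IntegrableOn.indicator
  · rw [uIoc_of_le ht]
    exact (hG.continuousOn.integrableOn_compact (isCompact_Icc.prod isCompact_Icc)).mono_set
      (prod_mono Ioc_subset_Icc_self Ioc_subset_Icc_self)
  · exact measurableSet_lt measurable_fst measurable_snd

/-- `∫_0^t ∫_0^{t-b} F σ b = ∫_0^t ∫_0^{t-σ} F σ b`. -/
theorem tri_cont' (F : ℝ → ℝ → E) (hF : Continuous (fun p : ℝ × ℝ => F p.1 p.2)) {t : ℝ}
    (ht : 0 ≤ t) :
    ∫ b in (0:ℝ)..t, ∫ σ in (0:ℝ)..(t - b), F σ b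
      = ∫ σ in (0:ℝ)..t, ∫ b in (0:ℝ)..(t - σ), F σ b := by
  have h := tri_cont (fun σ τ => F σ (t - τ)) (by fun_prop) ht
  have e1 : ∀ σ, ∫ τ in σ..t, F σ (t - τ) = ∫ b in (0:ℝ)..(t - σ), F σ b := by
    intro σ
    rw [intervalIntegral.integral_comp_sub_left (fun b => F σ b) t]; simp
  simp only [e1] at h
  rw [h]
  have := intervalIntegral.integral_comp_sub_left
    (fun b => ∫ σ in (0:ℝ)..(t - b), F σ b) t (a := 0) (b := t)
  simp at this
  exact this.symm

theorem g_cont {α : ℝ} (h : 1 < α) : Continuous (g α) := by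
  unfold g
  exact (Real.continuous_rpow_const (by linarith)).div_const _

theorem g_ii {β : ℝ} (h : 0 < β) (a b : ℝ) : IntervalIntegrable (g β) volume a b := by
  unfold g
  exact (intervalIntegral.intervalIntegrable_rpow' (by linarith)).div_const _

theorem g_int {β : ℝ} (h : 0 < β) {x : ℝ} (_ : 0 ≤ x) : ∫ s in (0:ℝ)..x, g β s = g (β + 1) x := by
  unfold g
  rw [intervalIntegral.integral_div, integral_rpow (Or.inl (by linarith)),
    Real.Gamma_add_one h.ne']
  rw [Real.zero_rpow (by linarith)]
  have : Real.Gamma β ≠ 0 := (Real.Gamma_pos_of_pos h).ne'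
  have h' := h.ne'
  simp only [sub_add_cancel, add_sub_cancel_right]
  field_simp
  simp

theorem g_mul {β : ℝ} (h : 0 < β) {x : ℝ} (hx : 0 ≤ x) : x * g β x = β * g (β + 1) x := by
  unfold g
  rw [Real.Gamma_add_one h.ne']
  have : Real.Gamma β ≠ 0 := (Real.Gamma_pos_of_pos h).ne'
  have h' := h.ne'
  have e : x ^ (β + 1 - 1) = x * x ^ (β - 1) := by
    rcases hx.eq_or_lt with rfl | hx
    · rw [Real.zero_rpow (by simpa using h')]; simp
    · rw [← Real.rpow_one_add' hx.le (by simpa using h')]; congr 1; ring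
  rw [e]; field_simp

/-- `1 * (g_β * h) = g_{β+1} * h`. -/
theorem conv_one_left {β : ℝ} (hβ : 0 < β) (h : ℝ → E) (hh : Continuous h) {t : ℝ}
    (ht : 0 ≤ t) [CompleteSpace E] :
    ∫ τ in (0:ℝ)..t, ∫ s in (0:ℝ)..τ, g β (τ - s) • h s
      = ∫ s in (0:ℝ)..t, g (β + 1) (t - s) • h s := by
  rw [← tri_gen (fun s τ => g β (τ - s) • h s) ht]
  · apply intervalIntegral.integral_congr
    intro s hs
    rw [uIcc_of_le ht] at hs
    simp only
    rw [intervalIntegral.integral_smul_const, ← g_int hβ (by linarith [hs.2] : 0 ≤ t - s)]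
    congr 1
    rw [intervalIntegral.integral_comp_sub_right (fun u => g β u) s]; simp
  · have hf : Integrable ((Ioc 0 t).indicator h) := by
      rw [integrable_indicator_iff measurableSet_Ioc]
      exact (hh.continuousOn.integrableOn_compact isCompact_Icc).mono_set Ioc_subset_Icc_self
    have hg : Integrable ((Ioc 0 t).indicator (g β)) := by
      rw [integrable_indicator_iff measurableSet_Ioc]
      exact (intervalIntegrable_iff_integrableOn_Ioc_of_le ht).1 (g_ii hβ 0 t)
    have := (hf.convolution_integrand (ContinuousLinearMap.lsmul ℝ ℝ).flip hg).swap
    refine (this.integrableOn (s := uIoc 0 t ×ˢ uIoc 0 t)).congr_fun ?_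
      (measurableSet_uIoc.prod measurableSet_uIoc)
    rintro ⟨s, τ⟩ ⟨hs, hτ⟩
    rw [uIoc_of_le ht] at hs hτ
    simp only at hs hτ
    simp only [Function.comp, Prod.swap, ContinuousLinearMap.flip_apply,
      ContinuousLinearMap.lsmul_apply, indicator_of_mem hs]
    split_ifs with hlt
    · rw [indicator_of_mem]
      exact ⟨by linarith, by linarith [hs.1, hτ.2]⟩
    · rw [indicator_of_notMem, zero_smul]
      intro h; exact hlt (by linarith [h.1])

/-- `g_β * (1 * h) = g_{β+1} * h`. -/
theorem conv_one_right {β : ℝ} (hβ : 1 < β) (h : ℝ → E) (hh : Continuous h) {t : ℝ}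
    (ht : 0 ≤ t) [CompleteSpace E] :
    ∫ τ in (0:ℝ)..t, g β (t - τ) • ∫ s in (0:ℝ)..τ, h s
      = ∫ s in (0:ℝ)..t, g (β + 1) (t - s) • h s := by
  have hg := g_cont hβ
  simp only [← intervalIntegral.integral_smul]
  rw [← tri_cont (fun s τ => g β (t - τ) • h s) (by fun_prop) ht]
  apply intervalIntegral.integral_congr
  intro s hs
  rw [uIcc_of_le ht] at hs
  simp only
  rw [intervalIntegral.integral_smul_const,
    ← g_int (by linarith : 0 < β) (by linarith [hs.2] : 0 ≤ t - s)]
  congr 1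
  rw [intervalIntegral.integral_comp_sub_left (fun u => g β u) t]; simp

/-- Continuity of `g_β * h`. -/
theorem conv_cont {β : ℝ} (hβ : 0 < β) (h : ℝ → E) (hh : Continuous h) :
    ∃ Q : ℝ → E, Continuous Q ∧
      ∀ τ, 0 ≤ τ → ∫ s in (0:ℝ)..τ, g β (τ - s) • h s = Q τ := by
  refine ⟨fun τ => τ ^ β • ∫ s in (0:ℝ)..1, g β (1 - s) • h (τ * s), ?_, ?_⟩
  swap
  · intro τ hτ
    rcases hτ.eq_or_lt with rfl | hτ
    · simp [Real.zero_rpow hβ.ne']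
    have := intervalIntegral.smul_integral_comp_mul_left (fun s => g β (τ - s) • h s) τ
      (a := 0) (b := 1)
    simp only [mul_zero, mul_one] at this
    beta_reduce
    rw [← this, ← intervalIntegral.integral_smul, ← intervalIntegral.integral_smul]
    apply intervalIntegral.integral_congr
    intro s hs
    rw [uIcc_of_le zero_le_one] at hs
    simp only [smul_smul]
    congr 1
    unfold g
    rw [show τ - τ * s = τ * (1 - s) by ring, Real.mul_rpow hτ.le (by linarith [hs.2]),
      Real.rpow_sub_one hτ.ne']
    field_simp
  refine Continuous.smul (Real.continuous_rpow_const hβ.le) ?_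
  rw [continuous_iff_continuousAt]
  intro t
  obtain ⟨C, hC⟩ := (isCompact_Icc (a := -(|t| + 1)) (b := |t| + 1)).exists_bound_of_continuousOn
    hh.continuousOn
  have gi : IntervalIntegrable (fun s => g β (1 - s)) volume 0 1 := by
    have := (g_ii hβ 0 1).comp_sub_left 1
    simpa using this.symm
  refine intervalIntegral.continuousAt_of_dominated_interval
    (bound := fun s => ‖g β (1 - s)‖ * C) ?_ ?_ ?_ ?_
  · refine Filter.Eventually.of_forall fun τ => ?_
    have h1 := (intervalIntegrable_iff.1 gi).aestronglyMeasurable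
    exact h1.smul ((by fun_prop : Continuous fun s => h (τ * s)).aestronglyMeasurable)
  · filter_upwards [Metric.ball_mem_nhds t one_pos] with τ h1
    refine Filter.Eventually.of_forall fun s hs => ?_
    rw [uIoc_of_le zero_le_one] at hs
    rw [norm_smul]
    gcongr
    apply hC
    rw [mem_Icc, ← abs_le, abs_mul, abs_of_pos hs.1]
    rw [Metric.mem_ball, Real.dist_eq] at h1
    have : |τ| ≤ |t| + 1 := by
      have := abs_sub_abs_le_abs_sub τ t
      linarith
    nlinarith [hs.1, hs.2, abs_nonneg τ]
  · exact gi.norm.mul_const _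
  · refine Filter.Eventually.of_forall fun s hs => ?_
    fun_prop

end aux

section ops
variable {X : Type*} [NormedAddCommGroup X] [NormedSpace ℂ X] [CompleteSpace X]

theorem op_rsmul (L : X →L[ℂ] X) (c : ℝ) (x : X) : L (c • x) = c • L x := by
  rw [← Complex.coe_smul, ← Complex.coe_smul, map_smul]

theorem op_bound (T : ℝ → X →L[ℂ] X) (hT : ∀ x, Continuous fun t => T t x) (a b : ℝ) :
    ∃ K, 0 ≤ K ∧ ∀ s ∈ Icc a b, ‖T s‖ ≤ K := by
  obtain ⟨K, hK⟩ := banach_steinhaus (g := fun s : Icc a b => T s) (fun x => by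
    obtain ⟨C, hC⟩ := (isCompact_Icc (a := a) (b := b)).exists_bound_of_continuousOn
      (hT x).continuousOn
    exact ⟨C, fun s => hC s s.2⟩)
  exact ⟨max K 0, le_max_right _ _, fun s hs => (hK ⟨s, hs⟩).trans (le_max_left _ _)⟩

theorem joint_cont (T : ℝ → X →L[ℂ] X) (hT : ∀ x, Continuous fun t => T t x)
    {Y : Type*} [TopologicalSpace Y] {a : Y → ℝ} {f : Y → X} (ha : Continuous a)
    (hf : Continuous f) : Continuous fun p => T (a p) (f p) := by
  rw [continuous_iff_continuousAt]
  intro p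
  obtain ⟨K, hK0, hK⟩ := op_bound T hT (a p - 1) (a p + 1)
  have h1 : Filter.Tendsto (fun q => T (a q) (f p)) (nhds p) (nhds (T (a p) (f p))) :=
    ((hT (f p)).comp ha).continuousAt
  have h2 : Filter.Tendsto (fun q => T (a q) (f q - f p)) (nhds p) (nhds 0) := by
    have h3 : Filter.Tendsto (fun q => K * ‖f q - f p‖) (nhds p) (nhds 0) := by
      have : Continuous (fun q => K * ‖f q - f p‖) := by fun_prop
      simpa using this.tendsto p
    refine squeeze_zero_norm' ?_ h3
    have := ha.continuousAt.preimage_mem_nhds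
      (Icc_mem_nhds (show a p - 1 < a p by linarith) (show a p < a p + 1 by linarith))
    filter_upwards [this] with q hq
    exact (T (a q)).le_of_opNorm_le (hK _ hq) _
  have := h1.add h2
  simp only [map_sub, add_sub_cancel, add_zero] at this
  exact this

theorem graph_integral (A : X →ₗ.[ℂ] X) (hA : IsClosed (A.graph : Set (X × X)))
    {a b : ℝ} {u w : ℝ → X} (hu : IntervalIntegrable u volume a b)
    (hw : IntervalIntegrable w volume a b) (h : ∀ s ∈ uIcc a b, (u s, w s) ∈ A.graph) :
    (∫ s in a..b, u s, ∫ s in a..b, w s) ∈ A.graph := by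
  have := hA
  have iic : ∀ (L : X →L[ℂ] ((X × X) ⧸ A.graph)) {f : ℝ → X},
      IntervalIntegrable f volume a b → IntervalIntegrable (fun s => L (f s)) volume a b :=
    fun L f hf => ⟨L.integrable_comp hf.1, L.integrable_comp hf.2⟩
  let Q := A.graph.mkQL
  let Q1 : X →L[ℂ] ((X × X) ⧸ A.graph) := Q.comp (ContinuousLinearMap.inl ℂ X X)
  let Q2 : X →L[ℂ] ((X × X) ⧸ A.graph) := Q.comp (ContinuousLinearMap.inr ℂ X X)
  have hQ : ∀ p q : X, Q1 p + Q2 q = 0 ↔ (p, q) ∈ A.graph := by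
    intro p q
    have : Q1 p + Q2 q = A.graph.mkQ (p, q) := by
      simp only [Q1, Q2, Q, ContinuousLinearMap.comp_apply, ← map_add]
      simp
    rw [this]; simp
  rw [← hQ, ← Q1.intervalIntegral_comp_comm hu, ← Q2.intervalIntegral_comp_comm hw,
    ← intervalIntegral.integral_add (iic Q1 hu) (iic Q2 hw)]
  rw [intervalIntegral.integral_congr (g := fun _ => 0)]
  · simp
  · intro s hs
    exact (hQ _ _).2 (h s hs)

/-- the functional identity `α S*S = t S + (α-1) 1*S`. -/
theorem star (α : ℝ) (hα1 : 1 < α) (A : X →ₗ.[ℂ] X)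
    (hA : IsClosed (A.graph : Set (X × X))) (T : ℝ → X →L[ℂ] X)
    (hT : ∀ x, Continuous fun t => T t x)
    (hcomm : ∀ t : ℝ, 0 ≤ t → ∀ x y : X, (x, y) ∈ A.graph → (T t x, T t y) ∈ A.graph)
    (heq : ∀ t : ℝ, 0 ≤ t → ∀ x y : X, (x, y) ∈ A.graph →
      T t x = x + ∫ s in (0:ℝ)..t, g α (t - s) • T s y)
    (y w : X) (hyw : (y, w) ∈ A.graph) (t : ℝ) (ht : 0 < t) :
    t • T t y + (α - 1) • ∫ s in (0:ℝ)..t, T s y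
      = α • ∫ s in (0:ℝ)..t, T s (T (t - s) y) := by
  have hg := g_cont hα1
  have hP : ∀ x, Continuous fun t => ∫ s in (0:ℝ)..t, T s x := fun x =>
    intervalIntegral.continuous_primitive (fun a b => (hT x).intervalIntegrable a b) 0
  have hTy := hT y
  have hTw := hT w
  have hPy := hP y
  have hPw := hP w
  set v : ℝ → X := fun b => b • T b y + (α - 1) • ∫ s in (0:ℝ)..b, T s y with hv
  set v' : ℝ → X := fun b => b • T b w + (α - 1) • ∫ s in (0:ℝ)..b, T s w with hv'
  have hvc : Continuous v := by fun_prop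
  have hvc' : Continuous v' := by fun_prop
  have hgraph : ∀ b, 0 ≤ b → (v b, v' b) ∈ A.graph := by
    intro b hb
    have h1 := hcomm b hb y w hyw
    have h2 := graph_integral A hA (hTy.intervalIntegrable 0 b) (hTw.intervalIntegrable 0 b)
      (fun s hs => hcomm s (by rw [uIcc_of_le hb] at hs; exact hs.1) y w hyw)
    have := A.graph.add_mem (A.graph.smul_mem (b : ℂ) h1)
      (A.graph.smul_mem ((α - 1 : ℝ) : ℂ) h2)
    simpa only [Prod.smul_mk, Prod.mk_add_mk, Complex.coe_smul] using this
  have hgv : ∀ b, 0 ≤ b → v b - ∫ s in (0:ℝ)..b, g α (b - s) • v' s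
      = α • ∫ s in (0:ℝ)..b, T s y := by
    intro b hb
    have hJ : ∫ s in (0:ℝ)..b, g (α + 1) (b - s) • T s w
        = (∫ s in (0:ℝ)..b, T s y) - b • y := by
      rw [← conv_one_left (by linarith) _ hTw hb]
      rw [intervalIntegral.integral_congr (g := fun τ => T τ y - y)]
      · rw [intervalIntegral.integral_sub (hTy.intervalIntegrable _ _) (by simp)]
        simp
      · intro τ hτ
        rw [uIcc_of_le hb] at hτ
        simp only
        rw [heq τ hτ.1 y w hyw]; simp
    have h1 : ∫ s in (0:ℝ)..b, g α (b - s) • v' s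
        = b • (∫ s in (0:ℝ)..b, g α (b - s) • T s w)
          - α • (∫ s in (0:ℝ)..b, g (α + 1) (b - s) • T s w)
          + (α - 1) • ∫ s in (0:ℝ)..b, g α (b - s) • ∫ u in (0:ℝ)..s, T u w := by
      have hg' := g_cont (show 1 < α + 1 by linarith)
      rw [← intervalIntegral.integral_smul, ← intervalIntegral.integral_smul,
        ← intervalIntegral.integral_smul, ← intervalIntegral.integral_sub,
        ← intervalIntegral.integral_add]
      · apply intervalIntegral.integral_congr
        intro s hs
        rw [uIcc_of_le hb] at hs
        have := g_mul (show 0 < α by linarith) (show 0 ≤ b - s by linarith [hs.2])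
        simp only [hv', smul_smul, smul_add]
        rw [← this, ← sub_smul]
        congr 2 <;> ring
      all_goals exact Continuous.intervalIntegrable (by fun_prop) _ _
    rw [h1, conv_one_right hα1 _ hTw hb, hJ]
    have h2 : ∫ s in (0:ℝ)..b, g α (b - s) • T s w = T b y - y := by
      rw [heq b hb y w hyw]; simp
    rw [h2]
    simp only [hv]
    module
  set Φ : ℝ → X := fun t => ∫ s in (0:ℝ)..t, T s (T (t - s) y) with hΦ
  have hΦc : Continuous Φ := by
    apply intervalIntegral.continuous_parametric_intervalIntegral_of_continuous
      (f := fun t s => T s (T (t - s) y)) _ continuous_id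
    exact joint_cont T hT continuous_snd (joint_cont T hT (by fun_prop) continuous_const)
  have hint : ∀ t, 0 ≤ t → ∫ b in (0:ℝ)..t, v b = ∫ b in (0:ℝ)..t, α • Φ b := by
    intro t ht
    have c1 : Continuous (fun b => T (t - b) (v b)) := joint_cont T hT (by fun_prop) hvc
    have c2 : Continuous (fun p : ℝ × ℝ => g α (t - p.2 - p.1) • T p.1 (v' p.2)) :=
      Continuous.smul (f := fun p : ℝ × ℝ => g α (t - p.2 - p.1)) (by fun_prop)
        (joint_cont T hT (by fun_prop) (by fun_prop))
    have c3 : Continuous (fun b => ∫ σ in (0:ℝ)..(t - b), g α (t - b - σ) • T σ (v' b)) := by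
      apply intervalIntegral.continuous_parametric_intervalIntegral_of_continuous
        (f := fun b σ => g α (t - b - σ) • T σ (v' b)) _ (by fun_prop)
      exact c2.comp continuous_swap
    have c4 : Continuous (fun b => ∫ σ in (0:ℝ)..(t - b), g α (t - b - σ) • v' σ) := by
      apply intervalIntegral.continuous_parametric_intervalIntegral_of_continuous
        (f := fun b σ => g α (t - b - σ) • v' σ) _ (by fun_prop)
      simp only [Function.uncurry_def]
      fun_prop
    have e1 : ∫ b in (0:ℝ)..t, v b = (∫ b in (0:ℝ)..t, T (t - b) (v b))
        - ∫ b in (0:ℝ)..t, ∫ σ in (0:ℝ)..(t - b), g α (t - b - σ) • T σ (v' b) := by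
      rw [← intervalIntegral.integral_sub (c1.intervalIntegrable _ _) (c3.intervalIntegrable _ _)]
      apply intervalIntegral.integral_congr
      intro b hb
      rw [uIcc_of_le ht] at hb
      simp only
      rw [heq (t - b) (by linarith [hb.2]) _ _ (hgraph b hb.1)]; simp
    have e2 : ∫ b in (0:ℝ)..t, T (t - b) (v b) = ∫ σ in (0:ℝ)..t, T σ (v (t - σ)) := by
      have := intervalIntegral.integral_comp_sub_left (fun σ => T σ (v (t - σ))) t
        (a := 0) (b := t)
      simpa using this
    have e3 := tri_cont' (fun σ b => g α (t - b - σ) • T σ (v' b)) c2 ht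
    rw [e1, e2, e3]
    have e4 : ∀ σ, ∫ b in (0:ℝ)..(t - σ), g α (t - b - σ) • T σ (v' b)
        = T σ (∫ b in (0:ℝ)..(t - σ), g α (t - σ - b) • v' b) := by
      intro σ
      rw [← (T σ).intervalIntegral_comp_comm]
      · apply intervalIntegral.integral_congr
        intro b _
        simp only [op_rsmul]
        congr 2; ring
      · exact Continuous.intervalIntegrable (by fun_prop) _ _
    simp only [e4]
    have c5 : Continuous (fun σ => T σ (v (t - σ))) := joint_cont T hT continuous_id (by fun_prop)
    have c6 : Continuous (fun σ => T σ (∫ b in (0:ℝ)..(t - σ), g α (t - σ - b) • v' b)) :=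
      joint_cont T hT continuous_id c4
    rw [← intervalIntegral.integral_sub (c5.intervalIntegrable _ _) (c6.intervalIntegrable _ _)]
    rw [intervalIntegral.integral_smul, hΦ, ← tri_cont (fun σ τ => T σ (T (τ - σ) y)) _ ht,
      ← intervalIntegral.integral_smul]
    · apply intervalIntegral.integral_congr
      intro σ hσ
      rw [uIcc_of_le ht] at hσ
      simp only [id]
      rw [← map_sub, hgv _ (by linarith [hσ.2]), op_rsmul]
      congr 1
      rw [(T σ).intervalIntegral_comp_comm]
      · congr 1
        rw [intervalIntegral.integral_comp_sub_right (fun b => T b y) σ]; simp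
      · exact Continuous.intervalIntegrable (by fun_prop) _ _
    · exact joint_cont T hT continuous_fst (joint_cont T hT (by fun_prop) continuous_const)
  have d1 := intervalIntegral.integral_hasDerivAt_right (hvc.intervalIntegrable 0 t)
    (hvc.stronglyMeasurableAtFilter _ _) hvc.continuousAt
  have hΦc' : Continuous (fun b => α • Φ b) := by fun_prop
  have d2 := intervalIntegral.integral_hasDerivAt_right (hΦc'.intervalIntegrable 0 t)
    (hΦc'.stronglyMeasurableAtFilter _ _) hΦc'.continuousAt
  refine d1.unique (d2.congr_of_eventuallyEq ?_)
  filter_upwards [lt_mem_nhds ht] with τ hτ using hint τ hτ.le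

theorem deriv_T (α : ℝ) (hα1 : 1 < α) (A : X →ₗ.[ℂ] X) (T : ℝ → X →L[ℂ] X)
    (hT : ∀ x, Continuous fun t => T t x)
    (heq : ∀ t : ℝ, 0 ≤ t → ∀ x y : X, (x, y) ∈ A.graph →
      T t x = x + ∫ s in (0:ℝ)..t, g α (t - s) • T s y)
    (y w : X) (hyw : (y, w) ∈ A.graph) (t : ℝ) (ht : 0 < t) :
    HasDerivAt (fun τ => T τ y) (Pa α T t w) t := by
  obtain ⟨Q, hQ, hQe⟩ := conv_cont (show 0 < α - 1 by linarith) (fun s => T s w) (hT w)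
  have d1 := intervalIntegral.integral_hasDerivAt_right (hQ.intervalIntegrable 0 t)
    (hQ.stronglyMeasurableAtFilter _ _) hQ.continuousAt
  have : Pa α T t w = Q t := hQe t ht.le
  rw [this]
  refine (d1.const_add y).congr_of_eventuallyEq ?_
  filter_upwards [lt_mem_nhds ht] with τ hτ
  rw [heq τ hτ.le y w hyw]
  congr 1
  have := conv_one_left (show 0 < α - 1 by linarith) (fun s => T s w) (hT w) hτ.le
  rw [sub_add_cancel] at this
  rw [← this]
  apply intervalIntegral.integral_congr
  intro s hs
  rw [uIcc_of_le hτ.le] at hs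
  exact hQe s hs.1

theorem deriv_Phi (α : ℝ) (hα1 : 1 < α) (A : X →ₗ.[ℂ] X)
    (hA : IsClosed (A.graph : Set (X × X))) (T : ℝ → X →L[ℂ] X)
    (hT : ∀ x, Continuous fun t => T t x)
    (hcomm : ∀ t : ℝ, 0 ≤ t → ∀ x y : X, (x, y) ∈ A.graph → (T t x, T t y) ∈ A.graph)
    (heq : ∀ t : ℝ, 0 ≤ t → ∀ x y : X, (x, y) ∈ A.graph →
      T t x = x + ∫ s in (0:ℝ)..t, g α (t - s) • T s y)
    (y w : X) (hyw : (y, w) ∈ A.graph) (t : ℝ) (ht : 0 < t) :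
    HasDerivAt (fun t => ∫ s in (0:ℝ)..t, T s (T (t - s) y))
      (T t y + (t / α) • Pa α T t w) t := by
  have d1 := deriv_T α hα1 A T hT heq y w hyw t ht
  have d2 := intervalIntegral.integral_hasDerivAt_right ((hT y).intervalIntegrable 0 t)
    ((hT y).stronglyMeasurableAtFilter _ _) (hT y).continuousAt
  have d3 := (((hasDerivAt_id t).smul d1).add (d2.const_smul (α - 1))).const_smul α⁻¹
  have hα : α ≠ 0 := by linarith
  convert d3.congr_of_eventuallyEq ?_ using 1
  · simp only [id, one_smul, smul_add, smul_smul]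
    rw [show t / α = α⁻¹ * t by field_simp]
    have : T t y = (α⁻¹ * 1 + α⁻¹ * (α - 1)) • T t y := by
      rw [show α⁻¹ * 1 + α⁻¹ * (α - 1) = 1 by field_simp; ring, one_smul]
    nth_rewrite 1 [this]
    module
  · filter_upwards [lt_mem_nhds ht] with τ hτ
    have := star α hα1 A hA T hT hcomm heq y w hyw τ hτ
    simp only [Pi.add_apply, Pi.smul_apply, Pi.smul_apply', id]
    rw [this, smul_smul, inv_mul_cancel₀ hα, one_smul]

end ops

section fin
variable {X : Type*} [NormedAddCommGroup X] [NormedSpace ℂ X] [CompleteSpace X]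

theorem sv_bound (T : ℝ → X →L[ℂ] X) (r C : ℝ)
    (hC : ∀ (n : ℕ) (d : ℕ → ℝ) (x : ℕ → X),
      d 0 = 0 → d n = r → (∀ i < n, d i < d (i + 1)) → (∀ i, ‖x i‖ ≤ 1) →
      ‖∑ i ∈ Finset.range n, (T (d (i + 1)) - T (d i)) (x i)‖ ≤ C)
    (B : ℝ) (hB : 0 ≤ B) (n : ℕ) (e : ℕ → ℝ) (x : ℕ → X) (h0 : 0 < e 0)
    (he : ∀ i < n, e i < e (i + 1)) (hn : e n < r) (hx : ∀ i < n, ‖x i‖ ≤ B) :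
    ‖∑ i ∈ Finset.range n, (T (e (i + 1)) - T (e i)) (x i)‖ ≤ C * B := by
  rcases hB.eq_or_lt with rfl | hB
  · rw [Finset.sum_eq_zero]
    · simp
    · intro i hi
      have := hx i (Finset.mem_range.1 hi)
      rw [norm_le_zero_iff.1 this, map_zero]
  let d : ℕ → ℝ := fun j => Nat.casesOn j 0 (fun i => if i ≤ n then e i else r)
  let x' : ℕ → X := fun j => Nat.casesOn j 0 (fun i => if i < n then B⁻¹ • x i else 0)
  have hd0 : d 0 = 0 := rfl
  have hd : ∀ i, d (i + 1) = if i ≤ n then e i else r := fun i => rfl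
  have hx0 : x' 0 = 0 := rfl
  have hx1 : ∀ i, x' (i + 1) = if i < n then B⁻¹ • x i else 0 := fun i => rfl
  have h := hC (n + 2) d x' hd0 (by rw [hd]; simp) ?_ ?_
  · rw [Finset.sum_range_succ', Finset.sum_range_succ, hx0, hx1 n, if_neg (lt_irrefl n), map_zero,
      map_zero, add_zero, add_zero] at h
    have e1 : ∑ i ∈ Finset.range n, (T (d (i + 1 + 1)) - T (d (i + 1))) (x' (i + 1))
        = B⁻¹ • ∑ i ∈ Finset.range n, (T (e (i + 1)) - T (e i)) (x i) := by
      rw [Finset.smul_sum]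
      apply Finset.sum_congr rfl
      intro i hi
      have hi := Finset.mem_range.1 hi
      rw [hd, hd, hx1, if_pos hi, if_pos hi.le, if_pos (by omega), op_rsmul]
    rw [e1, norm_smul, norm_inv, Real.norm_of_nonneg hB.le, inv_mul_le_iff₀ hB] at h
    linarith
  · intro i hi
    rcases i with _ | i
    · rw [hd0, hd]; simpa using h0
    · rw [hd, hd, if_pos (by omega)]
      split_ifs with h
      · exact he i (by omega)
      · have : i = n := by omega
        rw [this]; exact hn
  · intro i
    rcases i with _ | i
    · rw [hx0]; simp
    · rw [hx1]
      split_ifs with h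
      · rw [norm_smul, norm_inv, Real.norm_of_nonneg hB.le, inv_mul_le_iff₀ hB]
        simpa using hx i h
      · simp

theorem quot_bound (T : ℝ → X →L[ℂ] X) (hT : ∀ x, Continuous fun t => T t x) (r C K : ℝ)
    (hC : ∀ (n : ℕ) (d : ℕ → ℝ) (x : ℕ → X),
      d 0 = 0 → d n = r → (∀ i < n, d i < d (i + 1)) → (∀ i, ‖x i‖ ≤ 1) →
      ‖∑ i ∈ Finset.range n, (T (d (i + 1)) - T (d i)) (x i)‖ ≤ C)
    (hK0 : 0 ≤ K) (hK : ∀ s ∈ Icc 0 r, ‖T s‖ ≤ K) (y : X) (t : ℝ) (ht : 0 < t) (htr : t ≤ r)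
    (n : ℕ) (h : ℝ) (hh : h = t / (n + 1)) :
    ‖(∫ s in (0:ℝ)..t, T s (T (t - s) y)) - (∫ s in (0:ℝ)..(t - h), T s (T (t - h - s) y))
      - ∫ s in (0:ℝ)..h, T s (T (t - s) y)‖ ≤ C * (K * ‖y‖) * h := by
  have hpos : 0 < h := by rw [hh]; positivity
  have hth : (n + 1) * h = t := by rw [hh]; field_simp
  have c1 : Continuous (fun s => T s (T (t - s) y)) :=
    joint_cont T hT continuous_id (joint_cont T hT (by fun_prop) continuous_const)
  have c2 : Continuous (fun s => T s (T (t - h - s) y)) :=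
    joint_cont T hT continuous_id (joint_cont T hT (by fun_prop) continuous_const)
  have c3 : Continuous (fun s => T (s + h) (T (t - h - s) y)) :=
    joint_cont T hT (by fun_prop) (joint_cont T hT (by fun_prop) continuous_const)
  let q : ℝ → X := fun s => (T (s + h) - T s) (T (t - h - s) y)
  have cq : Continuous q := c3.sub c2
  have e1 : (∫ s in (0:ℝ)..t, T s (T (t - s) y)) - (∫ s in (0:ℝ)..(t - h), T s (T (t - h - s) y))
      - ∫ s in (0:ℝ)..h, T s (T (t - s) y) = ∫ s in (0:ℝ)..(t - h), q s := by
    have a1 : ∫ s in (0:ℝ)..(t - h), q s = (∫ s in (0:ℝ)..(t - h), T (s + h) (T (t - h - s) y))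
        - ∫ s in (0:ℝ)..(t - h), T s (T (t - h - s) y) := by
      rw [← intervalIntegral.integral_sub (c3.intervalIntegrable _ _) (c2.intervalIntegrable _ _)]
      rfl
    have a2 : ∫ s in (0:ℝ)..(t - h), T (s + h) (T (t - h - s) y)
        = ∫ s in h..t, T s (T (t - s) y) := by
      have := intervalIntegral.integral_comp_add_right (fun s => T s (T (t - s) y)) h
        (a := 0) (b := t - h)
      simp only [zero_add, sub_add_cancel] at this
      rw [← this]
      apply intervalIntegral.integral_congr
      intro s _
      simp only
      congr 3; ring
    have a3 := intervalIntegral.integral_add_adjacent_intervals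
      (c1.intervalIntegrable (μ := volume) 0 h) (c1.intervalIntegrable h t)
    rw [a1, a2, ← a3]; abel
  have e2 : ∫ s in (0:ℝ)..(t - h), q s
      = ∫ s in (0:ℝ)..h, ∑ i ∈ Finset.range n, q (s + i * h) := by
    have b1 := intervalIntegral.sum_integral_adjacent_intervals (f := q) (μ := volume)
      (a := fun i : ℕ => (i : ℝ) * h) (n := n) (fun k _ => cq.intervalIntegrable _ _)
    have b2 : (n : ℝ) * h = t - h := by linarith
    simp only [Nat.cast_zero, zero_mul, b2] at b1
    rw [← b1, intervalIntegral.integral_finsetSum]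
    · apply Finset.sum_congr rfl
      intro i _
      rw [intervalIntegral.integral_comp_add_right q]
      congr 1 <;> push_cast <;> ring
    · intro i _
      exact Continuous.intervalIntegrable (by fun_prop) _ _
  rw [e1, e2]
  have := intervalIntegral.norm_integral_le_of_norm_le_const_ae (a := 0) (b := h)
    (C := C * (K * ‖y‖)) (f := fun s => ∑ i ∈ Finset.range n, q (s + i * h)) ?_
  · rwa [sub_zero, abs_of_pos hpos] at this
  have hne : ∀ᵐ s : ℝ, s ≠ h := by
    rw [ae_iff]; simp
  filter_upwards [hne] with s hs hs'
  rw [uIoc_of_le hpos.le] at hs'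
  have hlt : s < h := lt_of_le_of_ne hs'.2 hs
  have := sv_bound T r C hC (K * ‖y‖) (by positivity) n (fun i => s + i * h)
    (fun i => T (t - h - (s + i * h)) y) (by simpa using hs'.1) (fun i _ => by
      push_cast; linarith) (by linarith) (fun i hi => by
      apply (T _).le_of_opNorm_le (hK _ _)
      have : (i : ℝ) + 1 ≤ n := by exact_mod_cast hi
      have h3 : ((i : ℝ) + 1) * h ≤ n * h := by gcongr
      have h4 : 0 ≤ (i : ℝ) * h := by positivity
      constructor <;> nlinarith [hs'.1])
  have e3 : ∀ i : ℕ, q (s + i * h) = (T (s + ((i + 1 : ℕ) : ℝ) * h) - T (s + i * h))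
      (T (t - h - (s + i * h)) y) := by
    intro i
    simp only [q]
    rw [show s + i * h + h = s + ((i + 1 : ℕ) : ℝ) * h by push_cast; ring]
  simp only [e3]
  exact this

theorem core_bound (α : ℝ) (hα1 : 1 < α) (A : X →ₗ.[ℂ] X)
    (hA : IsClosed (A.graph : Set (X × X))) (T : ℝ → X →L[ℂ] X)
    (hT : ∀ x, Continuous fun t => T t x) (hT0 : T 0 = 1)
    (hcomm : ∀ t : ℝ, 0 ≤ t → ∀ x y : X, (x, y) ∈ A.graph → (T t x, T t y) ∈ A.graph)
    (heq : ∀ t : ℝ, 0 ≤ t → ∀ x y : X, (x, y) ∈ A.graph →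
      T t x = x + ∫ s in (0:ℝ)..t, g α (t - s) • T s y)
    (r C K : ℝ)
    (hC : ∀ (n : ℕ) (d : ℕ → ℝ) (x : ℕ → X),
      d 0 = 0 → d n = r → (∀ i < n, d i < d (i + 1)) → (∀ i, ‖x i‖ ≤ 1) →
      ‖∑ i ∈ Finset.range n, (T (d (i + 1)) - T (d i)) (x i)‖ ≤ C)
    (hK0 : 0 ≤ K) (hK : ∀ s ∈ Icc 0 r, ‖T s‖ ≤ K)
    (y w : X) (hyw : (y, w) ∈ A.graph) (t : ℝ) (ht : 0 < t) (htr : t ≤ r) :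
    ‖t • Pa α T t w‖ ≤ α * (C * K) * ‖y‖ := by
  have d := deriv_Phi α hα1 A hA T hT hcomm heq y w hyw t ht
  set Φ : ℝ → X := fun t => ∫ s in (0:ℝ)..t, T s (T (t - s) y) with hΦ
  have c1 : Continuous (fun s => T s (T (t - s) y)) :=
    joint_cont T hT continuous_id (joint_cont T hT (by fun_prop) continuous_const)
  have d2 := intervalIntegral.integral_hasDerivAt_right (c1.intervalIntegrable 0 0)
    (c1.stronglyMeasurableAtFilter _ _) c1.continuousAt
  rw [hasDerivAt_iff_tendsto_slope_zero] at d d2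
  let hn : ℕ → ℝ := fun n => t / (n + 1)
  have hnpos : ∀ n, 0 < hn n := fun n => by simp only [hn]; positivity
  have hn0 : Filter.Tendsto hn Filter.atTop (nhds 0) := by
    have := tendsto_one_div_add_atTop_nhds_zero_nat (𝕜 := ℝ)
    have := this.const_mul t
    simpa [hn, div_eq_mul_inv] using this
  have t2 : Filter.Tendsto hn Filter.atTop (nhdsWithin 0 {0}ᶜ) :=
    tendsto_nhdsWithin_iff.2 ⟨hn0, Filter.Eventually.of_forall fun n => (hnpos n).ne'⟩
  have t1 : Filter.Tendsto (fun n => -hn n) Filter.atTop (nhdsWithin 0 {0}ᶜ) :=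
    tendsto_nhdsWithin_iff.2 ⟨by simpa using hn0.neg,
      Filter.Eventually.of_forall fun n => (neg_neg_of_pos (hnpos n)).ne⟩
  have l := ((d.comp t1).sub (d2.comp t2)).norm
  have hb : ‖(t / α) • Pa α T t w‖ ≤ C * (K * ‖y‖) := by
    have e : T t y + (t / α) • Pa α T t w - T 0 (T (t - 0) y) = (t / α) • Pa α T t w := by
      rw [hT0]; simp
    rw [← e]
    refine le_of_tendsto l (Filter.Eventually.of_forall fun n => ?_)
    have qb := quot_bound T hT r C K hC hK0 hK y t ht htr n (hn n) rfl
    have hp := hnpos n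
    simp only [Function.comp, zero_add, intervalIntegral.integral_same, sub_zero]
    have e2 : (-hn n)⁻¹ • (Φ (t + -hn n) - Φ t) - (hn n)⁻¹ • ∫ s in (0:ℝ)..hn n, T s (T (t - s) y)
        = (hn n)⁻¹ • (Φ t - Φ (t - hn n) - ∫ s in (0:ℝ)..hn n, T s (T (t - s) y)) := by
      rw [inv_neg, ← sub_eq_add_neg]; module
    rw [e2, norm_smul, norm_inv, Real.norm_of_nonneg hp.le, inv_mul_le_iff₀ hp]
    simp only [hΦ]
    linarith
  have hα : 0 < α := by linarith
  have : t • Pa α T t w = α • ((t / α) • Pa α T t w) := by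
    rw [smul_smul]; congr 1; field_simp
  rw [this, norm_smul, Real.norm_of_nonneg hα.le]
  nlinarith

theorem main_T (α : ℝ) (hα1 : 1 < α) (A : X →ₗ.[ℂ] X)
    (hA : IsClosed (A.graph : Set (X × X))) (hA_dense : Dense (A.domain : Set X))
    (T : ℝ → X →L[ℂ] X)
    (hT : ∀ x, Continuous fun t => T t x) (hT0 : T 0 = 1)
    (hcomm : ∀ t : ℝ, 0 ≤ t → ∀ x y : X, (x, y) ∈ A.graph → (T t x, T t y) ∈ A.graph)
    (heq : ∀ t : ℝ, 0 ≤ t → ∀ x y : X, (x, y) ∈ A.graph →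
      T t x = x + ∫ s in (0:ℝ)..t, g α (t - s) • T s y)
    (r : ℝ) (hsv : BoundedSemivariation T r) :
    ∃ M : ℝ, ∀ (x : X), ∀ t ∈ Icc (0:ℝ) r, ∃ z : X,
      (Pa α T t x, z) ∈ A.graph ∧ ‖t • z‖ ≤ M * ‖x‖ := by
  obtain ⟨C, hC⟩ := hsv
  obtain ⟨K, hK0, hK⟩ := op_bound T hT 0 r
  have hβ : 0 < α - 1 := by linarith
  refine ⟨α * (C * K), fun x t ht => ?_⟩
  rcases ht.1.eq_or_lt with rfl | ht0
  · refine ⟨0, ?_, ?_⟩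
    · have : Pa α T 0 x = 0 := by simp [Pa]
      rw [this]; exact A.graph.zero_mem
    · obtain ⟨z, hz⟩ := hA_dense.nonempty
      simp only [smul_zero, norm_zero]
      have hrC : 0 ≤ C ∨ r = 0 := by
        rcases ht.2.eq_or_lt with h | h
        · exact Or.inr h.symm
        · left
          have := hC 1 (fun i => i * r) 0 (by simp) (by simp) (by simpa using h) (by simp)
          simpa using this
      have hC0 : 0 ≤ C := by
        rcases hrC with h | h
        · exact h
        · have := hC 0 (fun _ => 0) 0 rfl h.symm (by simp) (by simp)
          simpa using this
      positivity
  have gi : IntervalIntegrable (fun s => g (α - 1) (t - s)) volume 0 t := by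
    have := (g_ii hβ 0 t).comp_sub_left t
    simpa using this.symm
  have ii : ∀ x, IntervalIntegrable (fun s => g (α - 1) (t - s) • T s x) volume 0 t := fun x =>
    gi.smul_continuousOn (hT x).continuousOn
  have hPsub : ∀ x y, Pa α T t (x - y) = Pa α T t x - Pa α T t y := by
    intro x y
    unfold Pa
    rw [← intervalIntegral.integral_sub (ii x) (ii y)]
    simp only [map_sub, smul_sub]
  have hPb : ∀ x, ‖Pa α T t x‖ ≤ (∫ s in (0:ℝ)..t, ‖g (α - 1) (t - s)‖ * K) * ‖x‖ := by
    intro x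
    unfold Pa
    rw [← intervalIntegral.integral_mul_const]
    refine intervalIntegral.norm_integral_le_of_norm_le ht.1
      (Filter.Eventually.of_forall fun s hs => ?_) ((gi.norm.mul_const _).mul_const _)
    rw [norm_smul, mul_assoc]
    gcongr
    exact (T s).le_of_opNorm_le (hK s ⟨hs.1.le, hs.2.trans ht.2⟩) x
  have hgr : ∀ y w, (y, w) ∈ A.graph → (Pa α T t y, Pa α T t w) ∈ A.graph := by
    intro y w hyw
    apply graph_integral A hA (ii y) (ii w)
    intro s hs
    rw [uIcc_of_le ht.1] at hs
    have := A.graph.smul_mem ((g (α - 1) (t - s) : ℝ) : ℂ) (hcomm s hs.1 y w hyw)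
    simpa only [Prod.smul_mk, Complex.coe_smul] using this
  have hcore : ∀ y w, (y, w) ∈ A.graph → ‖t • Pa α T t w‖ ≤ α * (C * K) * ‖y‖ :=
    fun y w hyw => core_bound α hα1 A hA T hT hT0 hcomm heq r C K hC hK0 hK y w hyw t ht0 ht.2
  obtain ⟨u, hu, hux⟩ := mem_closure_iff_seq_limit.1 (hA_dense x)
  have hw : ∀ n, ∃ w, (u n, w) ∈ A.graph := fun n => ⟨A ⟨u n, hu n⟩, A.mem_graph ⟨u n, hu n⟩⟩
  choose w hw using hw
  have hPu : Filter.Tendsto (fun n => Pa α T t (u n)) Filter.atTop (nhds (Pa α T t x)) := by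
    rw [tendsto_iff_norm_sub_tendsto_zero]
    have h1 := (tendsto_iff_norm_sub_tendsto_zero.1 hux).const_mul
      (∫ s in (0:ℝ)..t, ‖g (α - 1) (t - s)‖ * K)
    rw [mul_zero] at h1
    refine squeeze_zero (fun _ => norm_nonneg _) (fun n => ?_) h1
    rw [← hPsub]; exact hPb _
  have hcau : CauchySeq (fun n => t • Pa α T t (w n)) := by
    have h2 : ∀ m n, dist (t • Pa α T t (w m)) (t • Pa α T t (w n))
        ≤ α * (C * K) * dist (u m) (u n) := by
      intro m n
      rw [dist_eq_norm, dist_eq_norm, ← smul_sub, ← hPsub]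
      exact hcore _ _ (A.graph.sub_mem (hw m) (hw n))
    rw [cauchySeq_iff_tendsto_dist_atTop_0]
    have h3 := (cauchySeq_iff_tendsto_dist_atTop_0.1 hux.cauchySeq).const_mul (α * (C * K))
    rw [mul_zero] at h3
    exact squeeze_zero (fun _ => dist_nonneg) (fun p => h2 p.1 p.2) h3
  obtain ⟨z, hz⟩ := cauchySeq_tendsto_of_complete hcau
  have hz' : Filter.Tendsto (fun n => Pa α T t (w n)) Filter.atTop (nhds (t⁻¹ • z)) := by
    have := hz.const_smul t⁻¹
    simpa only [smul_smul, inv_mul_cancel₀ ht0.ne', one_smul] using this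
  refine ⟨t⁻¹ • z, ?_, ?_⟩
  · exact hA.mem_of_tendsto (hPu.prodMk_nhds hz')
      (Filter.Eventually.of_forall fun n => hgr _ _ (hw n))
  · rw [smul_smul, mul_inv_cancel₀ ht0.ne', one_smul]
    exact le_of_tendsto_of_tendsto' hz.norm (hux.norm.const_mul _) (fun n => hcore _ _ (hw n))

end fin

theorem stmt_16
    {X : Type*} [NormedAddCommGroup X] [NormedSpace ℂ X] [CompleteSpace X]
    (α : ℝ) (hα1 : 1 < α) (hα2 : α < 2)
    (A : X →ₗ.[ℂ] X) (hA_closed : IsClosed (A.graph : Set (X × X)))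
    (hA_dense : Dense (A.domain : Set X))
    (S : ℝ → X →L[ℂ] X)
    (hS_cont : ∀ x : X, ContinuousOn (fun t => S t x) (Ici (0:ℝ)))
    (hS_zero : S 0 = 1)
    (hS_dom : ∀ t : ℝ, 0 ≤ t → ∀ x ∈ A.domain, S t x ∈ A.domain)
    (hS_comm : ∀ t : ℝ, 0 ≤ t → ∀ x y : X, (x, y) ∈ A.graph → (S t x, S t y) ∈ A.graph)
    (hS_eq : ∀ t : ℝ, 0 ≤ t → ∀ x y : X, (x, y) ∈ A.graph →
      S t x = x + ∫ s in (0:ℝ)..t, g α (t - s) • S s y)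
    (r : ℝ) (hr : 0 < r) (hsv : BoundedSemivariation S r) :
    ∃ M : ℝ, ∀ (x : X), ∀ t ∈ Icc (0:ℝ) r, ∃ z : X,
      (Pa α S t x, z) ∈ A.graph ∧ ‖t • z‖ ≤ M * ‖x‖ := by
  let T : ℝ → X →L[ℂ] X := fun t => S (max t 0)
  have hTS : ∀ t, 0 ≤ t → T t = S t := fun t ht => by simp only [T, max_eq_left ht]
  have hint : ∀ β t x, 0 ≤ t → ∫ s in (0:ℝ)..t, g β (t - s) • T s x
      = ∫ s in (0:ℝ)..t, g β (t - s) • S s x := by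
    intro β t x ht
    apply intervalIntegral.integral_congr
    intro s hs
    rw [uIcc_of_le ht] at hs
    simp only
    rw [hTS s hs.1]
  have hT : ∀ x, Continuous fun t => T t x := fun x =>
    (hS_cont x).comp_continuous (by fun_prop) (fun t => le_max_right t 0)
  have hsv' : BoundedSemivariation T r := by
    obtain ⟨C, hC⟩ := hsv
    refine ⟨C, fun n d x h0 hn hd hx => ?_⟩
    have hpos : ∀ i, i ≤ n → 0 ≤ d i := by
      intro i
      induction i with
      | zero => intro _; exact h0.ge
      | succ k ih => intro hk; exact (ih (by omega)).trans (hd k (by omega)).le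
    have := hC n d x h0 hn hd hx
    rwa [Finset.sum_congr rfl (g := fun i => (S (d (i + 1)) - S (d i)) (x i))]
    intro i hi
    have hi := Finset.mem_range.1 hi
    rw [hTS _ (hpos i hi.le), hTS _ (hpos (i + 1) hi)]
  obtain ⟨M, hM⟩ := main_T α hα1 A hA_closed hA_dense T hT (by rw [hTS 0 le_rfl, hS_zero])
    (fun t ht x y h => by rw [hTS t ht]; exact hS_comm t ht x y h)
    (fun t ht x y h => by rw [hTS t ht, hint α t y ht]; exact hS_eq t ht x y h) r hsv'
  refine ⟨M, fun x t ht => ?_⟩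
  have e : Pa α T t x = Pa α S t x := hint _ t x ht.1
  rw [← e]
  exact hM x t ht
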